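/- arXiv:0807.3898 — 5 statements merged into one kernel-verified Lean document; each statement's English description precedes it below -/
import Mathlib

section
/- Let κ, θ, σ > 0 and set ν := 2κθ/σ². Define G(x) := ∫ₓ^∞ π_{ν,θ}(y)/y dy and f(x) := G(x)/π_{ν,θ}(x) for x > 0. Then f is twice continuously differentiable on (0,∞) and satisfies the eigenvalue equation (σ²/2)·x·f''(x) + κ(θ − x)·f'(x) = κ·f(x) for all x > 0. In particular, for any ε > 0 the function x ↦ π_{ν,θ}(ε)·G(x)/(G(ε)·π_{ν,θ}(x)) also satisfies this equation and takes the value 1 at x = ε. -/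
open Real MeasureTheory Set

/-- Gamma density with shape `ν` and rate `ν/θ`. -/
noncomputable def piDens (ν θ x : ℝ) : ℝ :=
  ((ν / θ) ^ ν / Real.Gamma ν) * x ^ (ν - 1) * Real.exp (-ν * x / θ)

/-- The function `G(x) = ∫ₓ^∞ π_{ν,θ}(y)/y dy`. -/
noncomputable def Gfun (ν θ x : ℝ) : ℝ :=
  ∫ y in Set.Ioi x, piDens ν θ y / y

theorem piDens_pos {ν θ x : ℝ} (hν : 0 < ν) (hθ : 0 < θ) (hx : 0 < x) : 0 < piDens ν θ x := by
  unfold piDens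
  have := Real.Gamma_pos_of_pos hν
  positivity

theorem piDens_hasDerivAt {ν θ x : ℝ} (hx : 0 < x) :
    HasDerivAt (piDens ν θ) (piDens ν θ x * ((ν - 1) / x - ν / θ)) x := by
  have h1 : HasDerivAt (fun x : ℝ => x ^ (ν - 1)) ((ν - 1) * x ^ (ν - 1 - 1)) x :=
    Real.hasDerivAt_rpow_const (Or.inl hx.ne')
  have h2 : HasDerivAt (fun x : ℝ => Real.exp (-ν * x / θ))
      (Real.exp (-ν * x / θ) * (-ν * 1 / θ)) x :=
    (((hasDerivAt_id x).const_mul (-ν)).div_const θ).exp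
  have h := (h1.const_mul ((ν / θ) ^ ν / Real.Gamma ν)).mul h2
  refine HasDerivAt.congr_deriv (f := piDens ν θ) h ?_
  rw [Real.rpow_sub_one hx.ne' (ν - 1)]
  unfold piDens
  ring

theorem g_contOn {ν θ : ℝ} : ContinuousOn (fun y => piDens ν θ y / y) (Ioi 0) := by
  intro x hx
  exact ((piDens_hasDerivAt hx).continuousAt.div continuousAt_id (ne_of_gt hx)).continuousWithinAt

theorem g_int {ν θ a : ℝ} (hν : 0 < ν) (hθ : 0 < θ) (ha : 0 < a) :
    IntegrableOn (fun y => piDens ν θ y / y) (Ioi a) := by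
  have h0 : IntegrableOn (piDens ν θ) (Ioi 0) := by
    have h := integrableOn_rpow_mul_exp_neg_mul_rpow (p := 1) (s := ν - 1) (b := ν / θ)
      (by linarith) one_pos (by positivity)
    refine IntegrableOn.congr_fun (h.const_mul ((ν / θ) ^ ν / Real.Gamma ν)) ?_ measurableSet_Ioi
    intro x _
    simp only [piDens, Real.rpow_one]
    rw [mul_assoc]
    congr 3
    ring
  have hs : Ioi a ⊆ Ioi (0:ℝ) := Ioi_subset_Ioi ha.le
  refine Integrable.mono' ((h0.mono_set hs).div_const a)
    ((g_contOn.mono hs).aestronglyMeasurable measurableSet_Ioi) ?_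
  filter_upwards [ae_restrict_mem measurableSet_Ioi] with y hy
  have hy' : a < y := hy
  have hp := piDens_pos hν hθ (ha.trans hy')
  rw [Real.norm_of_nonneg (div_nonneg hp.le (ha.trans hy').le)]
  gcongr

theorem G_pos {ν θ x : ℝ} (hν : 0 < ν) (hθ : 0 < θ) (hx : 0 < x) : 0 < Gfun ν θ x := by
  unfold Gfun
  rw [setIntegral_pos_iff_support_of_nonneg_ae _ (g_int hν hθ hx)]
  · have : Function.support (fun y => piDens ν θ y / y) ∩ Ioi x = Ioi x := by
      apply inter_eq_right.2
      intro y hy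
      exact (div_pos (piDens_pos hν hθ (hx.trans hy)) (hx.trans hy)).ne'
    rw [this]
    simp
  · filter_upwards [ae_restrict_mem measurableSet_Ioi] with y hy
    exact (div_pos (piDens_pos hν hθ (hx.trans hy)) (hx.trans hy)).le

theorem G_hasDerivAt {ν θ x : ℝ} (hν : 0 < ν) (hθ : 0 < θ) (hx : 0 < x) :
    HasDerivAt (Gfun ν θ) (-(piDens ν θ x / x)) x := by
  have hc : ContinuousAt (fun y => piDens ν θ y / y) x := g_contOn.continuousAt (Ioi_mem_nhds hx)
  have hi := g_int (a := x / 2) hν hθ (by positivity)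
  have h := intervalIntegral.integral_hasDerivAt_right (a := x / 2) (b := x)
    (f := fun y => piDens ν θ y / y)
    ((intervalIntegrable_iff_integrableOn_Ioc_of_le (by linarith)).2
      (hi.mono_set Ioc_subset_Ioi_self))
    (g_contOn.stronglyMeasurableAtFilter isOpen_Ioi x hx) hc
  refine (h.const_sub (Gfun ν θ (x / 2))).congr_of_eventuallyEq ?_
  filter_upwards [Ioi_mem_nhds (show x / 2 < x by linarith)] with y hy
  have hy' : x / 2 < y := hy
  have := intervalIntegral.integral_interval_add_Ioi' (a := x / 2) (b := y)
    (f := fun y => piDens ν θ y / y) (μ := volume)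
    ((intervalIntegrable_iff_integrableOn_Ioc_of_le hy'.le).2
      (hi.mono_set Ioc_subset_Ioi_self))
    (g_int hν hθ (by linarith))
  unfold Gfun
  linarith

theorem f_hasDerivAt {ν θ x : ℝ} (hν : 0 < ν) (hθ : 0 < θ) (hx : 0 < x) :
    HasDerivAt (fun x => Gfun ν θ x / piDens ν θ x)
      (-(1 / x) - ((ν - 1) / x - ν / θ) * (Gfun ν θ x / piDens ν θ x)) x := by
  have hp := piDens_pos hν hθ hx
  refine HasDerivAt.congr_deriv ((G_hasDerivAt hν hθ hx).div (piDens_hasDerivAt hx) hp.ne') ?_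
  field_simp
  try ring

theorem f_deriv2 {ν θ x : ℝ} (hx : 0 < x) (f : ℝ → ℝ)
    (hf : ∀ x > 0, HasDerivAt f (-(1 / x) - ((ν - 1) / x - ν / θ) * f x) x) :
    HasDerivAt (deriv f) (1 / x ^ 2 + (ν - 1) / x ^ 2 * f x
      - ((ν - 1) / x - ν / θ) * (-(1 / x) - ((ν - 1) / x - ν / θ) * f x)) x := by
  have hinv := hasDerivAt_inv hx.ne'
  have h := hinv.neg.sub (((hinv.const_mul (ν - 1)).sub_const (ν / θ)).mul (hf x hx))
  refine HasDerivAt.congr_of_eventuallyEq (HasDerivAt.congr_deriv h ?_) ?_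
  · simp only [div_eq_mul_inv]
    ring
  · filter_upwards [Ioi_mem_nhds hx] with y hy
    rw [(hf y hy).deriv]
    simp [div_eq_mul_inv]

theorem f_contDiff {ν θ : ℝ} (f : ℝ → ℝ)
    (hf : ∀ x > 0, HasDerivAt f (-(1 / x) - ((ν - 1) / x - ν / θ) * f x) x) (n : ℕ) :
    ContDiffOn ℝ n f (Ioi 0) := by
  have hd : DifferentiableOn ℝ f (Ioi 0) :=
    fun x hx => (hf x hx).differentiableAt.differentiableWithinAt
  induction n with
  | zero => exact contDiffOn_zero.2 hd.continuousOn
  | succ n ih =>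
    push_cast
    rw [contDiffOn_succ_iff_deriv_of_isOpen isOpen_Ioi]
    refine ⟨hd, by simp, ?_⟩
    have hne : ∀ x ∈ Ioi (0:ℝ), x ≠ 0 := fun x hx => ne_of_gt hx
    have h1 : ContDiffOn ℝ n (fun x : ℝ => -(1 / x) - ((ν - 1) / x - ν / θ) * f x) (Ioi 0) :=
      ((contDiffOn_const.div contDiffOn_id hne).neg).sub
        (((contDiffOn_const.div contDiffOn_id hne).sub contDiffOn_const).mul ih)
    exact h1.congr fun x hx => (hf x hx).deriv

theorem cir_eigenfunction
    (κ θ σ ν : ℝ) (hκ : 0 < κ) (hθ : 0 < θ) (hσ : 0 < σ)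
    (hν : ν = 2 * κ * θ / σ ^ 2)
    (f : ℝ → ℝ) (hf : ∀ x, f x = Gfun ν θ x / piDens ν θ x) :
    ContDiffOn ℝ 2 f (Set.Ioi 0) ∧
    (∀ x > (0:ℝ),
      σ ^ 2 / 2 * x * deriv (deriv f) x + κ * (θ - x) * deriv f x = κ * f x) ∧
    (∀ ε > (0:ℝ),
      (∀ x > (0:ℝ),
        σ ^ 2 / 2 * x
            * deriv (deriv (fun y =>
                piDens ν θ ε * Gfun ν θ y / (Gfun ν θ ε * piDens ν θ y))) x
          + κ * (θ - x)
            * deriv (fun y =>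
                piDens ν θ ε * Gfun ν θ y / (Gfun ν θ ε * piDens ν θ y)) x
          = κ * (piDens ν θ ε * Gfun ν θ x / (Gfun ν θ ε * piDens ν θ x))) ∧
      piDens ν θ ε * Gfun ν θ ε / (Gfun ν θ ε * piDens ν θ ε) = 1) := by
  have hν0 : 0 < ν := by rw [hν]; positivity
  have hff : f = fun x => Gfun ν θ x / piDens ν θ x := funext hf
  have hd : ∀ x > 0, HasDerivAt f (-(1 / x) - ((ν - 1) / x - ν / θ) * f x) x := by
    intro x hx
    rw [hff]
    exact f_hasDerivAt hν0 hθ hx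
  have hode : ∀ x > (0:ℝ),
      σ ^ 2 / 2 * x * deriv (deriv f) x + κ * (θ - x) * deriv f x = κ * f x := by
    intro x hx
    rw [(f_deriv2 hx f hd).deriv, (hd x hx).deriv]
    have hk : κ = σ ^ 2 / 2 * (ν / θ) := by rw [hν]; field_simp
    rw [hk]
    field_simp
    ring
  refine ⟨f_contDiff f hd 2, hode, fun ε hε => ?_⟩
  have hG := G_pos hν0 hθ hε
  have hp := piDens_pos hν0 hθ hε
  constructor
  · intro x hx
    have he : (fun y => piDens ν θ ε * Gfun ν θ y / (Gfun ν θ ε * piDens ν θ y))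
        = fun y => piDens ν θ ε / Gfun ν θ ε * f y := by
      funext y
      rw [hf, mul_div_mul_comm]
    have he2 : deriv (fun y => piDens ν θ ε / Gfun ν θ ε * f y)
        = fun y => piDens ν θ ε / Gfun ν θ ε * deriv f y := by
      funext y
      rw [deriv_const_mul_field]
    rw [he, he2, deriv_const_mul_field, mul_div_mul_comm, ← hf]
    linear_combination (piDens ν θ ε / Gfun ν θ ε) * hode x hx
  · field_simp
end

section
/- Let θ > 0 and 0 < ν < 1, and define G(x) := ∫ₓ^∞ π_{ν,θ}(y)/y dy for x > 0. Then the asymptotic expansion G(x)/π_{ν,θ}(x) = 1/(1 − ν) + Γ(ν − 1)·(ν/θ)^{1−ν}·x^{1−ν} + o(x^{1−ν}) holds as x → 0⁺; precisely, x^{ν−1}·( G(x)/π_{ν,θ}(x) − 1/(1 − ν) ) tends to Γ(ν − 1)·(ν/θ)^{1−ν} as x tends to 0 from the right. -/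
open Real MeasureTheory Set Filter

theorem tail_ibp (a ν x : ℝ) (ha : 0 < a) (hν0 : 0 < ν) (hν1 : ν < 1) (hx : 0 < x) :
    ∫ y in Set.Ioi x, y ^ (ν - 2) * Real.exp (-a * y) =
      (x ^ (ν - 1) * Real.exp (-a * x)
        - a * ∫ y in Set.Ioi x, y ^ (ν - 1) * Real.exp (-a * y)) / (1 - ν) := by
  have i1 : IntegrableOn (fun y : ℝ => y ^ (ν - 1) * Real.exp (-a * y)) (Set.Ioi x) := by
    have := integrableOn_rpow_mul_exp_neg_mul_rpow (s := ν - 1) (p := 1) (b := a)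
      (by linarith) one_pos ha
    simp only [Real.rpow_one] at this
    exact this.mono_set (Set.Ioi_subset_Ioi hx.le)
  have i2 : IntegrableOn (fun y : ℝ => y ^ (ν - 2) * Real.exp (-a * y)) (Set.Ioi x) := by
    refine Integrable.mono (integrableOn_Ioi_rpow_of_lt (a := ν - 2) (by linarith) hx) ?_ ?_
    · exact Measurable.aestronglyMeasurable (by fun_prop)
    · refine (ae_restrict_iff' measurableSet_Ioi).mpr (ae_of_all _ fun y hy => ?_)
      have hy0 : 0 < y := hx.trans hy
      rw [norm_mul]
      refine mul_le_of_le_one_right (norm_nonneg _) ?_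
      rw [Real.norm_eq_abs, Real.abs_exp, Real.exp_le_one_iff]
      nlinarith
  have hd : ∀ y ∈ Set.Ici x, HasDerivAt (fun y : ℝ => y ^ (ν - 1) * Real.exp (-a * y))
      ((ν - 1) * (y ^ (ν - 2) * Real.exp (-a * y))
        - a * (y ^ (ν - 1) * Real.exp (-a * y))) y := by
    intro y hy
    have hy0 : 0 < y := lt_of_lt_of_le hx hy
    have h1 := Real.hasDerivAt_rpow_const (x := y) (p := ν - 1) (Or.inl hy0.ne')
    have h2 : HasDerivAt (fun y : ℝ => Real.exp (-a * y)) (Real.exp (-a * y) * (-a * 1)) y :=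
      ((hasDerivAt_id y).const_mul (-a)).exp
    refine (h1.mul h2).congr_deriv ?_
    rw [show ν - 1 - 1 = ν - 2 by ring]
    ring
  have key := integral_Ioi_of_hasDerivAt_of_tendsto' hd
    ((i2.const_mul (ν - 1)).sub (i1.const_mul a))
    (tendsto_rpow_mul_exp_neg_mul_atTop_nhds_zero (ν - 1) a ha)
  rw [integral_sub (i2.const_mul (ν - 1)) (i1.const_mul a), integral_const_mul,
    integral_const_mul] at key
  rw [eq_div_iff (by linarith)]
  linarith

theorem Gfun_over_piDens_asymptotics (θ ν : ℝ) (hθ : 0 < θ)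
    (hν0 : 0 < ν) (hν1 : ν < 1) :
    Filter.Tendsto
      (fun x : ℝ => x ^ (ν - 1) * (Gfun ν θ x / piDens ν θ x - 1 / (1 - ν)))
      (nhdsWithin 0 (Set.Ioi 0))
      (nhds (Real.Gamma (ν - 1) * (ν / θ) ^ (1 - ν))) := by
  obtain ⟨a, haa⟩ : ∃ a, a = ν / θ := ⟨_, rfl⟩
  have ha : 0 < a := haa ▸ div_pos hν0 hθ
  have hG : 0 < Real.Gamma ν := Real.Gamma_pos_of_pos hν0
  have hpi : ∀ y, piDens ν θ y =
      (a ^ ν / Real.Gamma ν) * (y ^ (ν - 1) * Real.exp (-a * y)) := by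
    intro y
    rw [piDens, ← haa, show -ν * y / θ = -a * y by rw [haa]; ring]
    ring
  have i0 : IntegrableOn (fun y : ℝ => y ^ (ν - 1) * Real.exp (-a * y)) (Set.Ioi 0) := by
    have := integrableOn_rpow_mul_exp_neg_mul_rpow (s := ν - 1) (p := 1) (b := a)
      (by linarith) one_pos ha
    simpa only [Real.rpow_one] using this
  have t1 : Filter.Tendsto (fun x : ℝ => ∫ y in Set.Ioi x, y ^ (ν - 1) * Real.exp (-a * y))
      (nhdsWithin 0 (Set.Ioi 0)) (nhds ((1 / a) ^ ν * Real.Gamma ν)) := by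
    have h := i0.continuousWithinAt_Ici_primitive_Ioi.mono_left
      (nhdsWithin_mono 0 Set.Ioi_subset_Ici_self)
    rw [← Real.integral_rpow_mul_exp_neg_mul_Ioi hν0 ha]
    simpa only [neg_mul] using h
  have t2 : Filter.Tendsto (fun x : ℝ => -a / (1 - ν) * Real.exp (a * x))
      (nhdsWithin 0 (Set.Ioi 0)) (nhds (-a / (1 - ν))) := by
    have : Continuous (fun x : ℝ => -a / (1 - ν) * Real.exp (a * x)) := by fun_prop
    have h := this.tendsto 0
    simp only [mul_zero, Real.exp_zero, mul_one] at h
    exact h.mono_left nhdsWithin_le_nhds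
  have hlim : -a / (1 - ν) * ((1 / a) ^ ν * Real.Gamma ν)
      = Real.Gamma (ν - 1) * (ν / θ) ^ (1 - ν) := by
    have h1 : Real.Gamma ν = (ν - 1) * Real.Gamma (ν - 1) := by
      have := Real.Gamma_add_one (s := ν - 1) (by linarith)
      rwa [sub_add_cancel] at this
    have h2 : (1 - ν) ≠ 0 := by linarith
    rw [← haa, h1, Real.rpow_sub ha, Real.rpow_one, one_div, Real.inv_rpow ha.le]
    field_simp
    ring
  rw [← hlim]
  refine (t2.mul t1).congr' ?_
  filter_upwards [self_mem_nhdsWithin] with x hx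
  have hx : 0 < x := hx
  have hGf : Gfun ν θ x = (a ^ ν / Real.Gamma ν) *
      ∫ y in Set.Ioi x, y ^ (ν - 2) * Real.exp (-a * y) := by
    rw [Gfun, ← integral_const_mul]
    refine setIntegral_congr_fun measurableSet_Ioi fun y hy => ?_
    have hy0 : 0 < y := hx.trans hy
    simp only [hpi]
    rw [show ν - 2 = ν - 1 - 1 by ring, Real.rpow_sub_one hy0.ne' (ν - 1)]
    ring
  have hc : a ^ ν / Real.Gamma ν ≠ 0 := (div_pos (Real.rpow_pos_of_pos ha _) hG).ne'
  rw [hGf, hpi, mul_div_mul_left _ _ hc, tail_ibp a ν x ha hν0 hν1 hx]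
  have h2 : (1 - ν) ≠ 0 := by linarith
  have h3 : x ^ (ν - 1) ≠ 0 := (Real.rpow_pos_of_pos hx _).ne'
  have h4 : Real.exp (-a * x) = (Real.exp (a * x))⁻¹ := by rw [← Real.exp_neg, neg_mul]
  have h5 := Real.exp_ne_zero (a * x)
  generalize (∫ y in Set.Ioi x, y ^ (ν - 1) * Real.exp (-a * y)) = I
  rw [h4]
  field_simp
  ring
end

section
/- Let ν₁, ν₂ > 0, set Nᵢ := νᵢ^{νᵢ}/Γ(νᵢ), and for r > 0, s ∈ ℝ define x₁(r,s) := ((ν₁+ν₂)/(ν₁²+ν₂²))·(ν₁ r − ν₂ s) and x₂(r,s) := ((ν₁+ν₂)/(ν₁²+ν₂²))·(ν₂ r + ν₁ s). Set C₁ := ∫_{−ν₂/ν₁}^{ν₁/ν₂} x₁(1,y)^{ν₁−1}·x₂(1,y)^{ν₂−1} dy and C₂ := ∫_{−ν₂/ν₁}^{ν₁/ν₂} [ (ν₁²/(ν₁+ν₂)²)·x₁(1,y)^{ν₁}·x₂(1,y)^{ν₂−1} + (ν₂²/(ν₁+ν₂)²)·x₁(1,y)^{ν₁−1}·x₂(1,y)^{ν₂}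 ] dy (both finite and positive). Then for every c ≥ 0 and every continuously differentiable bounded function h : ℝ → ℝ with bounded derivative, the function f(x₁,x₂) := h( (ν₁ x₁ + ν₂ x₂)/(ν₁+ν₂) ) satisfies ∫∫_{(0,∞)²} π_{ν₁,1}(x₁)·π_{ν₂,1}(x₂)·[ x₁·(∂f/∂x₁)² + x₂·(∂f/∂x₂)² + c·f² ] dx₁ dx₂ = ((ν₁+ν₂)²/(ν₁²+ν₂²))·N₁·N₂·∫₀^∞ r^{ν₁+ν₂−1}·e^{−(ν₁+ν₂)r}·[ C₂·r·h'(r)² + c·C₁·h(r)² ] dr. -/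
open Real MeasureTheory Set

/-- First coordinate of the inverse linear change of variables. -/
noncomputable def x1c (ν₁ ν₂ r s : ℝ) : ℝ :=
  (ν₁ + ν₂) / (ν₁ ^ 2 + ν₂ ^ 2) * (ν₁ * r - ν₂ * s)

/-- Second coordinate of the inverse linear change of variables. -/
noncomputable def x2c (ν₁ ν₂ r s : ℝ) : ℝ :=
  (ν₁ + ν₂) / (ν₁ ^ 2 + ν₂ ^ 2) * (ν₂ * r + ν₁ * s)

/-- The constant `C₁`. -/
noncomputable def C1 (ν₁ ν₂ : ℝ) : ℝ :=
  ∫ y in (-(ν₂ / ν₁))..(ν₁ / ν₂),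
    x1c ν₁ ν₂ 1 y ^ (ν₁ - 1) * x2c ν₁ ν₂ 1 y ^ (ν₂ - 1)

/-- The constant `C₂`. -/
noncomputable def C2 (ν₁ ν₂ : ℝ) : ℝ :=
  ∫ y in (-(ν₂ / ν₁))..(ν₁ / ν₂),
    (ν₁ ^ 2 / (ν₁ + ν₂) ^ 2 * (x1c ν₁ ν₂ 1 y ^ ν₁ * x2c ν₁ ν₂ 1 y ^ (ν₂ - 1))
      + ν₂ ^ 2 / (ν₁ + ν₂) ^ 2
          * (x1c ν₁ ν₂ 1 y ^ (ν₁ - 1) * x2c ν₁ ν₂ 1 y ^ ν₂))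

noncomputable def chg (ν₁ ν₂ : ℝ) (p : ℝ × ℝ) : ℝ × ℝ :=
  (x1c ν₁ ν₂ p.1 (p.1 * p.2), x2c ν₁ ν₂ p.1 (p.1 * p.2))

noncomputable def chgD (ν₁ ν₂ : ℝ) (p : ℝ × ℝ) : ℝ × ℝ →L[ℝ] ℝ × ℝ :=
  (Matrix.toLin (.finTwoProd ℝ) (.finTwoProd ℝ)
    !![(ν₁ + ν₂) / (ν₁ ^ 2 + ν₂ ^ 2) * (ν₁ - ν₂ * p.2),
       (ν₁ + ν₂) / (ν₁ ^ 2 + ν₂ ^ 2) * (- ν₂ * p.1);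
       (ν₁ + ν₂) / (ν₁ ^ 2 + ν₂ ^ 2) * (ν₂ + ν₁ * p.2),
       (ν₁ + ν₂) / (ν₁ ^ 2 + ν₂ ^ 2) * (ν₁ * p.1)]).toContinuousLinearMap

theorem chg_hasFDerivAt (ν₁ ν₂ : ℝ) (p : ℝ × ℝ) :
    HasFDerivAt (chg ν₁ ν₂) (chgD ν₁ ν₂ p) p := by
  unfold chgD
  rw [Matrix.toLin_finTwoProd_toContinuousLinearMap]
  have h1 : HasFDerivAt (fun p : ℝ × ℝ => p.1) (ContinuousLinearMap.fst ℝ ℝ ℝ) p := hasFDerivAt_fst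
  have h2 : HasFDerivAt (fun p : ℝ × ℝ => p.2) (ContinuousLinearMap.snd ℝ ℝ ℝ) p := hasFDerivAt_snd
  have h3 := ((h1.const_mul ν₁).sub ((h1.mul h2).const_mul ν₂)).const_mul
    ((ν₁ + ν₂) / (ν₁ ^ 2 + ν₂ ^ 2))
  have h4 := ((h1.const_mul ν₂).add ((h1.mul h2).const_mul ν₁)).const_mul
    ((ν₁ + ν₂) / (ν₁ ^ 2 + ν₂ ^ 2))
  refine (h3.prodMk h4).congr_fderiv ?_
  ext <;> simp <;> ring

theorem chgD_det (ν₁ ν₂ : ℝ) (hν₁ : 0 < ν₁) (hν₂ : 0 < ν₂) (p : ℝ × ℝ) :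
    (chgD ν₁ ν₂ p).det = (ν₁ + ν₂) ^ 2 / (ν₁ ^ 2 + ν₂ ^ 2) * p.1 := by
  unfold chgD
  simp only [LinearMap.det_toContinuousLinearMap, LinearMap.det_toLin,
    Matrix.det_fin_two_of]
  have : ν₁ ^ 2 + ν₂ ^ 2 ≠ 0 := by positivity
  field_simp
  ring

theorem chg_sum (ν₁ ν₂ : ℝ) (hν₁ : 0 < ν₁) (hν₂ : 0 < ν₂) (p : ℝ × ℝ) :
    ν₁ * (chg ν₁ ν₂ p).1 + ν₂ * (chg ν₁ ν₂ p).2 = (ν₁ + ν₂) * p.1 := by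
  have : ν₁ ^ 2 + ν₂ ^ 2 ≠ 0 := by positivity
  simp only [chg, x1c, x2c]
  field_simp
  ring

theorem chg_diff (ν₁ ν₂ : ℝ) (hν₁ : 0 < ν₁) (hν₂ : 0 < ν₂) (p : ℝ × ℝ) :
    ν₁ * (chg ν₁ ν₂ p).2 - ν₂ * (chg ν₁ ν₂ p).1 = (ν₁ + ν₂) * (p.1 * p.2) := by
  have : ν₁ ^ 2 + ν₂ ^ 2 ≠ 0 := by positivity
  simp only [chg, x1c, x2c]
  field_simp
  ring

theorem x1c_scale (ν₁ ν₂ r y : ℝ) : x1c ν₁ ν₂ r (r * y) = r * x1c ν₁ ν₂ 1 y := by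
  simp only [x1c]; ring

theorem x2c_scale (ν₁ ν₂ r y : ℝ) : x2c ν₁ ν₂ r (r * y) = r * x2c ν₁ ν₂ 1 y := by
  simp only [x2c]; ring

theorem x1c_pos (ν₁ ν₂ y : ℝ) (hν₁ : 0 < ν₁) (hν₂ : 0 < ν₂) :
    0 < x1c ν₁ ν₂ 1 y ↔ y < ν₁ / ν₂ := by
  have : 0 < (ν₁ + ν₂) / (ν₁ ^ 2 + ν₂ ^ 2) := by positivity
  rw [x1c, mul_pos_iff_of_pos_left this, lt_div_iff₀ hν₂]
  constructor <;> intro h <;> linarith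

theorem x2c_pos (ν₁ ν₂ y : ℝ) (hν₁ : 0 < ν₁) (hν₂ : 0 < ν₂) :
    0 < x2c ν₁ ν₂ 1 y ↔ -(ν₂ / ν₁) < y := by
  have : 0 < (ν₁ + ν₂) / (ν₁ ^ 2 + ν₂ ^ 2) := by positivity
  rw [x2c, mul_pos_iff_of_pos_left this, ← neg_div, div_lt_iff₀ hν₁]
  constructor <;> intro h <;> linarith

theorem chg_injOn (ν₁ ν₂ : ℝ) (hν₁ : 0 < ν₁) (hν₂ : 0 < ν₂) :
    InjOn (chg ν₁ ν₂) (Ioi (0:ℝ) ×ˢ Ioo (-(ν₂ / ν₁)) (ν₁ / ν₂)) := by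
  rintro ⟨r, y⟩ ⟨hr, -⟩ ⟨r', y'⟩ - he
  have hr : 0 < r := hr
  have h1 := chg_sum ν₁ ν₂ hν₁ hν₂ (r, y)
  have h2 := chg_diff ν₁ ν₂ hν₁ hν₂ (r, y)
  rw [he, chg_sum ν₁ ν₂ hν₁ hν₂] at h1
  rw [he, chg_diff ν₁ ν₂ hν₁ hν₂] at h2
  have hs : ν₁ + ν₂ ≠ 0 := by positivity
  have e1 : r' = r := mul_left_cancel₀ hs h1
  have e2 : r' * y' = r * y := mul_left_cancel₀ hs h2
  subst e1
  have e3 := mul_left_cancel₀ hr.ne' e2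
  rw [e3]

theorem chg_image (ν₁ ν₂ : ℝ) (hν₁ : 0 < ν₁) (hν₂ : 0 < ν₂) :
    chg ν₁ ν₂ '' (Ioi (0:ℝ) ×ˢ Ioo (-(ν₂ / ν₁)) (ν₁ / ν₂)) = Ioi (0:ℝ) ×ˢ Ioi (0:ℝ) := by
  ext ⟨a, b⟩
  constructor
  · rintro ⟨⟨r, y⟩, ⟨hr, hy⟩, he⟩
    have hr : 0 < r := hr
    simp only [chg, x1c_scale, x2c_scale, Prod.mk.injEq] at he
    obtain ⟨rfl, rfl⟩ := he
    exact ⟨mul_pos hr ((x1c_pos _ _ _ hν₁ hν₂).2 hy.2), mul_pos hr ((x2c_pos _ _ _ hν₁ hν₂).2 hy.1)⟩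
  · rintro ⟨ha, hb⟩
    have ha : 0 < a := ha
    have hb : 0 < b := hb
    have hq : 0 < ν₁ * a + ν₂ * b := by positivity
    have he : chg ν₁ ν₂ ((ν₁ * a + ν₂ * b) / (ν₁ + ν₂), (ν₁ * b - ν₂ * a) / (ν₁ * a + ν₂ * b))
        = (a, b) := by
      have h0 : ν₁ ^ 2 + ν₂ ^ 2 ≠ 0 := by positivity
      simp only [chg, x1c, x2c, Prod.mk.injEq]
      constructor <;> field_simp <;> ring
    have hr : 0 < (ν₁ * a + ν₂ * b) / (ν₁ + ν₂) := by positivity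
    refine ⟨((ν₁ * a + ν₂ * b) / (ν₁ + ν₂), (ν₁ * b - ν₂ * a) / (ν₁ * a + ν₂ * b)),
      ⟨hr, ?_, ?_⟩, he⟩
    · simp only
      rw [← x2c_pos _ _ _ hν₁ hν₂]
      simp only [chg, x1c_scale, x2c_scale, Prod.mk.injEq] at he
      exact pos_of_mul_pos_right (lt_of_lt_of_eq hb he.2.symm) hr.le
    · simp only
      rw [← x1c_pos _ _ _ hν₁ hν₂]
      simp only [chg, x1c_scale, x2c_scale, Prod.mk.injEq] at he
      exact pos_of_mul_pos_right (lt_of_lt_of_eq ha he.1.symm) hr.le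

/-- The generic two-dimensional integrand. -/
noncomputable def kern (ν₁ ν₂ α β : ℝ) (g : ℝ → ℝ) (p : ℝ × ℝ) : ℝ :=
  (p.1 ^ (α - 1) * exp (-ν₁ * p.1)) * (p.2 ^ (β - 1) * exp (-ν₂ * p.2))
    * g ((ν₁ * p.1 + ν₂ * p.2) / (ν₁ + ν₂))

theorem gam_int (α ν : ℝ) (hα : 0 < α) (hν : 0 < ν) :
    IntegrableOn (fun x : ℝ => x ^ (α - 1) * exp (-ν * x)) (Ioi 0) := by
  have := integrableOn_rpow_mul_exp_neg_mul_rpow (p := 1) (s := α - 1) (b := ν)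
    (by linarith) one_pos hν
  simpa only [rpow_one] using this

theorem kern_int (ν₁ ν₂ α β : ℝ) (hν₁ : 0 < ν₁) (hν₂ : 0 < ν₂) (hα : 0 < α) (hβ : 0 < β)
    (g : ℝ → ℝ) (hg : Continuous g) (M : ℝ) (hM : ∀ x, |g x| ≤ M) :
    IntegrableOn (kern ν₁ ν₂ α β g) (Ioi (0:ℝ) ×ˢ Ioi (0:ℝ)) (volume.prod volume) := by
  rw [IntegrableOn, ← Measure.prod_restrict]
  refine ((gam_int α ν₁ hα hν₁).mul_prod (gam_int β ν₂ hβ hν₂)).mul_bdd (c := M) ?_ ?_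
  · exact Continuous.aestronglyMeasurable (by fun_prop)
  · exact Filter.Eventually.of_forall fun x => hM _

theorem kern_chg (ν₁ ν₂ α β : ℝ) (hν₁ : 0 < ν₁) (hν₂ : 0 < ν₂) (g : ℝ → ℝ) (p : ℝ × ℝ)
    (hp : p ∈ Ioi (0:ℝ) ×ˢ Ioo (-(ν₂ / ν₁)) (ν₁ / ν₂)) :
    |(chgD ν₁ ν₂ p).det| • kern ν₁ ν₂ α β g (chg ν₁ ν₂ p) =
      (ν₁ + ν₂) ^ 2 / (ν₁ ^ 2 + ν₂ ^ 2) *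
      (p.1 ^ (α + β - 1) * exp (-(ν₁ + ν₂) * p.1) * g p.1) *
      (x1c ν₁ ν₂ 1 p.2 ^ (α - 1) * x2c ν₁ ν₂ 1 p.2 ^ (β - 1)) := by
  obtain ⟨r, y⟩ := p
  obtain ⟨hr, hy⟩ := hp
  have hr : 0 < r := hr
  have h1 := (x1c_pos _ _ _ hν₁ hν₂).2 hy.2
  have h2 := (x2c_pos _ _ _ hν₁ hν₂).2 hy.1
  have hs : ν₁ + ν₂ ≠ 0 := by positivity
  have hsum := chg_sum ν₁ ν₂ hν₁ hν₂ (r, y)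
  rw [chgD_det _ _ hν₁ hν₂, abs_of_nonneg (by positivity), smul_eq_mul, kern, hsum,
    mul_div_cancel_left₀ _ hs]
  have hexp : exp (-(ν₁ + ν₂) * r) =
      exp (-ν₁ * (chg ν₁ ν₂ (r, y)).1) * exp (-ν₂ * (chg ν₁ ν₂ (r, y)).2) := by
    rw [← exp_add]; congr 1; linarith
  have hpow : r ^ (α + β - 1) = r * r ^ (α - 1) * r ^ (β - 1) := by
    rw [show α + β - 1 = 1 + (α - 1) + (β - 1) by ring, rpow_add hr, rpow_add hr, rpow_one]
  simp only at h1 h2 ⊢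
  rw [hexp, hpow]
  simp only [chg, x1c_scale, x2c_scale]
  rw [mul_rpow hr.le h1.le, mul_rpow hr.le h2.le]
  ring

theorem kern_eq (ν₁ ν₂ α β : ℝ) (hν₁ : 0 < ν₁) (hν₂ : 0 < ν₂) (g : ℝ → ℝ) :
    ∫ p in Ioi (0:ℝ) ×ˢ Ioi (0:ℝ), kern ν₁ ν₂ α β g p ∂(volume.prod volume) =
      (ν₁ + ν₂) ^ 2 / (ν₁ ^ 2 + ν₂ ^ 2) *
      (∫ r in Ioi (0:ℝ), r ^ (α + β - 1) * exp (-(ν₁ + ν₂) * r) * g r) *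
      ∫ y in Ioo (-(ν₂ / ν₁)) (ν₁ / ν₂),
        x1c ν₁ ν₂ 1 y ^ (α - 1) * x2c ν₁ ν₂ 1 y ^ (β - 1) := by
  have hm : MeasurableSet (Ioi (0:ℝ) ×ˢ Ioo (-(ν₂ / ν₁)) (ν₁ / ν₂)) :=
    measurableSet_Ioi.prod measurableSet_Ioo
  rw [← chg_image ν₁ ν₂ hν₁ hν₂, ← Measure.volume_eq_prod,
    integral_image_eq_integral_abs_det_fderiv_smul volume hm
    (fun x _ => (chg_hasFDerivAt ν₁ ν₂ x).hasFDerivWithinAt) (chg_injOn ν₁ ν₂ hν₁ hν₂),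
    setIntegral_congr_fun hm (kern_chg ν₁ ν₂ α β hν₁ hν₂ g), Measure.volume_eq_prod,
    ← integral_const_mul ((ν₁ + ν₂) ^ 2 / (ν₁ ^ 2 + ν₂ ^ 2))]
  exact setIntegral_prod_mul (μ := (volume : Measure ℝ)) (ν := (volume : Measure ℝ))
    (fun r => (ν₁ + ν₂) ^ 2 / (ν₁ ^ 2 + ν₂ ^ 2) * (r ^ (α + β - 1) * exp (-(ν₁ + ν₂) * r) * g r))
    (fun y => x1c ν₁ ν₂ 1 y ^ (α - 1) * x2c ν₁ ν₂ 1 y ^ (β - 1)) _ _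

theorem ang_int (ν₁ ν₂ α β : ℝ) (hν₁ : 0 < ν₁) (hν₂ : 0 < ν₂) (hα : 0 < α) (hβ : 0 < β) :
    IntegrableOn (fun y => x1c ν₁ ν₂ 1 y ^ (α - 1) * x2c ν₁ ν₂ 1 y ^ (β - 1))
      (Ioo (-(ν₂ / ν₁)) (ν₁ / ν₂)) := by
  have hm : MeasurableSet (Ioi (0:ℝ) ×ˢ Ioo (-(ν₂ / ν₁)) (ν₁ / ν₂)) :=
    measurableSet_Ioi.prod measurableSet_Ioo
  have h := kern_int ν₁ ν₂ α β hν₁ hν₂ hα hβ (fun _ => 1) continuous_const 1 (by simp)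
  rw [← chg_image ν₁ ν₂ hν₁ hν₂, ← Measure.volume_eq_prod,
    integrableOn_image_iff_integrableOn_abs_det_fderiv_smul volume hm
    (fun x _ => (chg_hasFDerivAt ν₁ ν₂ x).hasFDerivWithinAt) (chg_injOn ν₁ ν₂ hν₁ hν₂),
    integrableOn_congr_fun (kern_chg ν₁ ν₂ α β hν₁ hν₂ _) hm, Measure.volume_eq_prod,
    IntegrableOn, ← Measure.prod_restrict] at h
  have h2 := h.prod_right_ae
  rw [ae_restrict_iff' measurableSet_Ioi] at h2
  have h3 : ∃ r : ℝ, r ∈ Ioi (0:ℝ) ∧ (r ∈ Ioi (0:ℝ) → _) :=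
    ((frequently_ae_mem_iff (s := Ioi (0:ℝ)) (μ := volume)).2 (by simp)).and_eventually h2 |>.exists
  obtain ⟨r, hr, h4⟩ := h3
  have h5 := h4 hr
  have hr' : 0 < r := hr
  have hne : (ν₁ + ν₂) ^ 2 / (ν₁ ^ 2 + ν₂ ^ 2) *
      (r ^ (α + β - 1) * exp (-(ν₁ + ν₂) * r) * 1) ≠ 0 := by positivity
  exact (integrable_const_mul_iff (IsUnit.mk0 _ hne) _).1 h5

theorem rad_int (ν₁ ν₂ α : ℝ) (hν₁ : 0 < ν₁) (hν₂ : 0 < ν₂) (hα : 0 < α)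
    (g : ℝ → ℝ) (hg : Continuous g) (M : ℝ) (hM : ∀ x, |g x| ≤ M) :
    IntegrableOn (fun r => r ^ (α - 1) * exp (-(ν₁ + ν₂) * r) * g r) (Ioi 0) :=
  (gam_int α (ν₁ + ν₂) hα (by positivity)).mul_bdd (c := M) hg.aestronglyMeasurable
    (Filter.Eventually.of_forall fun x => hM _)

theorem two_dim_dirichlet_form_reduction
    (ν₁ ν₂ : ℝ) (hν₁ : 0 < ν₁) (hν₂ : 0 < ν₂)
    (c : ℝ) (hc : 0 ≤ c)
    (h : ℝ → ℝ) (hh : ContDiff ℝ 1 h)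
    (hb : ∃ M, ∀ x, |h x| ≤ M) (hb' : ∃ M, ∀ x, |deriv h x| ≤ M) :
    (∫ a in Set.Ioi (0:ℝ), ∫ b in Set.Ioi (0:ℝ),
        piDens ν₁ 1 a * piDens ν₂ 1 b
          * (a * (deriv (fun t => h ((ν₁ * t + ν₂ * b) / (ν₁ + ν₂))) a) ^ 2
            + b * (deriv (fun t => h ((ν₁ * a + ν₂ * t) / (ν₁ + ν₂))) b) ^ 2
            + c * (h ((ν₁ * a + ν₂ * b) / (ν₁ + ν₂))) ^ 2))
      = (ν₁ + ν₂) ^ 2 / (ν₁ ^ 2 + ν₂ ^ 2)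
          * (ν₁ ^ ν₁ / Real.Gamma ν₁) * (ν₂ ^ ν₂ / Real.Gamma ν₂)
          * ∫ r in Set.Ioi (0:ℝ),
              r ^ (ν₁ + ν₂ - 1) * Real.exp (-(ν₁ + ν₂) * r)
                * (C2 ν₁ ν₂ * r * (deriv h r) ^ 2 + c * C1 ν₁ ν₂ * (h r) ^ 2) := by
  obtain ⟨M, hM⟩ := hb
  obtain ⟨M', hM'⟩ := hb'
  have hs : ν₁ + ν₂ ≠ 0 := by positivity
  have hd : Differentiable ℝ h := hh.differentiable one_ne_zero
  have hd' : Continuous (deriv h) := hh.continuous_deriv le_rfl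
  set g : ℝ → ℝ := fun x => h x ^ 2 with hg
  set g' : ℝ → ℝ := fun x => deriv h x ^ 2 with hg'
  have hgc : Continuous g := hd.continuous.pow 2
  have hgc' : Continuous g' := hd'.pow 2
  have hgM : ∀ x, |g x| ≤ M ^ 2 := fun x => by
    rw [hg]; simp only [abs_pow]; exact pow_le_pow_left₀ (abs_nonneg _) (hM x) 2
  have hgM' : ∀ x, |g' x| ≤ M' ^ 2 := fun x => by
    rw [hg']; simp only [abs_pow]; exact pow_le_pow_left₀ (abs_nonneg _) (hM' x) 2
  have D1 : ∀ a b : ℝ, deriv (fun t => h ((ν₁ * t + ν₂ * b) / (ν₁ + ν₂))) a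
      = deriv h ((ν₁ * a + ν₂ * b) / (ν₁ + ν₂)) * (ν₁ / (ν₁ + ν₂)) := fun a b => by
    have : HasDerivAt (fun t : ℝ => (ν₁ * t + ν₂ * b) / (ν₁ + ν₂)) (ν₁ / (ν₁ + ν₂)) a := by
      simpa using (((hasDerivAt_id a).const_mul ν₁).add_const (ν₂ * b)).div_const (ν₁ + ν₂)
    exact ((hd _).hasDerivAt.comp a this).deriv
  have D2 : ∀ a b : ℝ, deriv (fun t => h ((ν₁ * a + ν₂ * t) / (ν₁ + ν₂))) b
      = deriv h ((ν₁ * a + ν₂ * b) / (ν₁ + ν₂)) * (ν₂ / (ν₁ + ν₂)) := fun a b => by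
    have : HasDerivAt (fun t : ℝ => (ν₁ * a + ν₂ * t) / (ν₁ + ν₂)) (ν₂ / (ν₁ + ν₂)) b := by
      simpa using (((hasDerivAt_id b).const_mul ν₂).const_add (ν₁ * a)).div_const (ν₁ + ν₂)
    exact ((hd _).hasDerivAt.comp b this).deriv
  set N := (ν₁ ^ ν₁ / Real.Gamma ν₁) * (ν₂ ^ ν₂ / Real.Gamma ν₂) with hN
  have I1 := kern_int ν₁ ν₂ (ν₁ + 1) ν₂ hν₁ hν₂ (by positivity) hν₂ g' hgc' _ hgM'
  have I2 := kern_int ν₁ ν₂ ν₁ (ν₂ + 1) hν₁ hν₂ hν₁ (by positivity) g' hgc' _ hgM'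
  have I3 := kern_int ν₁ ν₂ ν₁ ν₂ hν₁ hν₂ hν₁ hν₂ g hgc _ hgM
  set F : ℝ × ℝ → ℝ := fun p =>
    N * (ν₁ ^ 2 / (ν₁ + ν₂) ^ 2) * kern ν₁ ν₂ (ν₁ + 1) ν₂ g' p
    + N * (ν₂ ^ 2 / (ν₁ + ν₂) ^ 2) * kern ν₁ ν₂ ν₁ (ν₂ + 1) g' p
    + N * c * kern ν₁ ν₂ ν₁ ν₂ g p with hF
  have J1 := I1.const_mul (N * (ν₁ ^ 2 / (ν₁ + ν₂) ^ 2))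
  have J2 := I2.const_mul (N * (ν₂ ^ 2 / (ν₁ + ν₂) ^ 2))
  have J3 := I3.const_mul (N * c)
  have IF : IntegrableOn F (Ioi (0:ℝ) ×ˢ Ioi (0:ℝ)) (volume.prod volume) := (J1.add J2).add J3
  have L1 : (∫ a in Set.Ioi (0:ℝ), ∫ b in Set.Ioi (0:ℝ),
        piDens ν₁ 1 a * piDens ν₂ 1 b
          * (a * (deriv (fun t => h ((ν₁ * t + ν₂ * b) / (ν₁ + ν₂))) a) ^ 2
            + b * (deriv (fun t => h ((ν₁ * a + ν₂ * t) / (ν₁ + ν₂))) b) ^ 2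
            + c * (h ((ν₁ * a + ν₂ * b) / (ν₁ + ν₂))) ^ 2))
      = ∫ p in Ioi (0:ℝ) ×ˢ Ioi (0:ℝ), F p ∂(volume.prod volume) := by
    rw [setIntegral_prod _ IF]
    refine setIntegral_congr_fun measurableSet_Ioi fun a ha => ?_
    refine setIntegral_congr_fun measurableSet_Ioi fun b hb => ?_
    have ha : 0 < a := ha
    have hb : 0 < b := hb
    have ea : a ^ (ν₁ + 1 - 1) = a * a ^ (ν₁ - 1) := by
      rw [show ν₁ + 1 - 1 = 1 + (ν₁ - 1) by ring, rpow_add ha, rpow_one]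
    have eb : b ^ (ν₂ + 1 - 1) = b * b ^ (ν₂ - 1) := by
      rw [show ν₂ + 1 - 1 = 1 + (ν₂ - 1) by ring, rpow_add hb, rpow_one]
    simp only [D1, D2, hF, kern, piDens, hg, hg', hN, ea, eb, div_one, ← div_pow]
    ring
  have L2 : ∫ p in Ioi (0:ℝ) ×ˢ Ioi (0:ℝ), F p ∂(volume.prod volume) =
      N * (ν₁ ^ 2 / (ν₁ + ν₂) ^ 2) *
        (∫ p in Ioi (0:ℝ) ×ˢ Ioi (0:ℝ), kern ν₁ ν₂ (ν₁ + 1) ν₂ g' p ∂(volume.prod volume))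
      + N * (ν₂ ^ 2 / (ν₁ + ν₂) ^ 2) *
        (∫ p in Ioi (0:ℝ) ×ˢ Ioi (0:ℝ), kern ν₁ ν₂ ν₁ (ν₂ + 1) g' p ∂(volume.prod volume))
      + N * c * (∫ p in Ioi (0:ℝ) ×ˢ Ioi (0:ℝ), kern ν₁ ν₂ ν₁ ν₂ g p ∂(volume.prod volume)) := by
    rw [← integral_const_mul, ← integral_const_mul, ← integral_const_mul,
      ← integral_add J1 J2]
    exact integral_add (J1.add J2) J3
  have hlt : -(ν₂ / ν₁) ≤ ν₁ / ν₂ := by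
    have : 0 < ν₂ / ν₁ := by positivity
    have : 0 < ν₁ / ν₂ := by positivity
    linarith
  have E1 : C1 ν₁ ν₂ = ∫ y in Ioo (-(ν₂ / ν₁)) (ν₁ / ν₂),
      x1c ν₁ ν₂ 1 y ^ (ν₁ - 1) * x2c ν₁ ν₂ 1 y ^ (ν₂ - 1) := by
    rw [C1, intervalIntegral.integral_of_le hlt, integral_Ioc_eq_integral_Ioo]
  have E2 : C2 ν₁ ν₂ = ν₁ ^ 2 / (ν₁ + ν₂) ^ 2 * (∫ y in Ioo (-(ν₂ / ν₁)) (ν₁ / ν₂),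
      x1c ν₁ ν₂ 1 y ^ (ν₁ + 1 - 1) * x2c ν₁ ν₂ 1 y ^ (ν₂ - 1))
      + ν₂ ^ 2 / (ν₁ + ν₂) ^ 2 * (∫ y in Ioo (-(ν₂ / ν₁)) (ν₁ / ν₂),
      x1c ν₁ ν₂ 1 y ^ (ν₁ - 1) * x2c ν₁ ν₂ 1 y ^ (ν₂ + 1 - 1)) := by
    have A1 := (ang_int ν₁ ν₂ (ν₁ + 1) ν₂ hν₁ hν₂ (by positivity) hν₂).const_mul
      (ν₁ ^ 2 / (ν₁ + ν₂) ^ 2)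
    have A2 := (ang_int ν₁ ν₂ ν₁ (ν₂ + 1) hν₁ hν₂ hν₁ (by positivity)).const_mul
      (ν₂ ^ 2 / (ν₁ + ν₂) ^ 2)
    rw [C2, intervalIntegral.integral_of_le hlt, integral_Ioc_eq_integral_Ioo,
      ← integral_const_mul, ← integral_const_mul, ← integral_add A1 A2]
    simp only [add_sub_cancel_right]
  have R : (∫ r in Set.Ioi (0:ℝ),
              r ^ (ν₁ + ν₂ - 1) * Real.exp (-(ν₁ + ν₂) * r)
                * (C2 ν₁ ν₂ * r * (deriv h r) ^ 2 + c * C1 ν₁ ν₂ * (h r) ^ 2)) =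
      C2 ν₁ ν₂ * (∫ r in Ioi (0:ℝ), r ^ (ν₁ + ν₂ + 1 - 1) * exp (-(ν₁ + ν₂) * r) * g' r)
      + c * C1 ν₁ ν₂ * (∫ r in Ioi (0:ℝ), r ^ (ν₁ + ν₂ - 1) * exp (-(ν₁ + ν₂) * r) * g r) := by
    have B1 := (rad_int ν₁ ν₂ (ν₁ + ν₂ + 1) hν₁ hν₂ (by positivity) g' hgc' _ hgM').const_mul
      (C2 ν₁ ν₂)
    have B2 := (rad_int ν₁ ν₂ (ν₁ + ν₂) hν₁ hν₂ (by positivity) g hgc _ hgM).const_mul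
      (c * C1 ν₁ ν₂)
    rw [← integral_const_mul, ← integral_const_mul, ← integral_add B1 B2]
    refine setIntegral_congr_fun measurableSet_Ioi fun r hr => ?_
    have hr : 0 < r := hr
    have er : r ^ (ν₁ + ν₂ + 1 - 1) = r * r ^ (ν₁ + ν₂ - 1) := by
      rw [show ν₁ + ν₂ + 1 - 1 = 1 + (ν₁ + ν₂ - 1) by ring, rpow_add hr, rpow_one]
    simp only [er, hg, hg']
    ring
  rw [L1, L2, R, kern_eq _ _ _ _ hν₁ hν₂, kern_eq _ _ _ _ hν₁ hν₂, kern_eq _ _ _ _ hν₁ hν₂,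
    ← E1, E2, show ν₁ + 1 + ν₂ - 1 = ν₁ + ν₂ + 1 - 1 by ring,
    show ν₁ + (ν₂ + 1) - 1 = ν₁ + ν₂ + 1 - 1 by ring]
  ring
end

section
/- Let κᵢ, θᵢ, σᵢ > 0 with νᵢ := 2κᵢθᵢ/σᵢ², βᵢ := εᵢ/σᵢ², αᵢ := γ/σᵢ² for i = 1,2, where ε₁, ε₂ ≥ 0 and γ ∈ ℝ, and let π(x₁,x₂) := π_{ν₁,θ₁}(x₁)·π_{ν₂,θ₂}(x₂). Define the drift A₁(x) := κ₁(1 + β₁x₂)(θ₁ − x₁) + κ₂α₂x₁(θ₂ − x₂), A₂(x) := κ₂(1 + β₂x₁)(θ₂ − x₂) + κ₁α₁x₂(θ₁ − x₁), and the diffusion matrix S(x) with entries S₁₁ = σ₁²x₁ + ε₁x₁x₂, S₁₂ = S₂₁ = γx₁x₂, S₂₂ = σ₂²x₂ + ε₂x₁x₂. Then for every x ∈ (0,∞)² and i = 1,2, Aᵢ(x) = (1/(2π(x)))·∑_{j=1}^2 ∂/∂xⱼ[ π(x)·S_{ij}(x) ]. Consequently, for every twice continuously differentiable f, the ADC generator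 L f := A₁·∂₁f + A₂·∂₂f + (1/2)(S₁₁·∂₁₁f + 2S₁₂·∂₁₂f + S₂₂·∂₂₂f) satisfies L f(x) = (1/2)·(1/π(x))·∇·( π(x)·S(x)·∇f(x) ) on (0,∞)². -/
open Real MeasureTheory Set

/-- Partial derivative in the first variable. -/
noncomputable def d1 (f : ℝ × ℝ → ℝ) (p : ℝ × ℝ) : ℝ :=
  deriv (fun t => f (t, p.2)) p.1

/-- Partial derivative in the second variable. -/
noncomputable def d2 (f : ℝ × ℝ → ℝ) (p : ℝ × ℝ) : ℝ :=
  deriv (fun t => f (p.1, t)) p.2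

/-- Product of two Gamma densities. -/
noncomputable def pi2 (ν₁ θ₁ ν₂ θ₂ : ℝ) (p : ℝ × ℝ) : ℝ :=
  piDens ν₁ θ₁ p.1 * piDens ν₂ θ₂ p.2

/-- Entry `S₁₁` of the ADC diffusion matrix. -/
noncomputable def S11 (σ₁ ε₁ : ℝ) (p : ℝ × ℝ) : ℝ := σ₁ ^ 2 * p.1 + ε₁ * p.1 * p.2

/-- Off-diagonal entry `S₁₂ = S₂₁` of the ADC diffusion matrix. -/
noncomputable def S12 (γ : ℝ) (p : ℝ × ℝ) : ℝ := γ * p.1 * p.2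

/-- Entry `S₂₂` of the ADC diffusion matrix. -/
noncomputable def S22 (σ₂ ε₂ : ℝ) (p : ℝ × ℝ) : ℝ := σ₂ ^ 2 * p.2 + ε₂ * p.1 * p.2

/-- First component of the ADC drift. -/
noncomputable def A1 (κ₁ θ₁ σ₁ κ₂ θ₂ σ₂ ε₁ γ : ℝ) (p : ℝ × ℝ) : ℝ :=
  κ₁ * (1 + ε₁ / σ₁ ^ 2 * p.2) * (θ₁ - p.1)
    + κ₂ * (γ / σ₂ ^ 2) * p.1 * (θ₂ - p.2)

/-- Second component of the ADC drift. -/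
noncomputable def A2 (κ₁ θ₁ σ₁ κ₂ θ₂ σ₂ ε₂ γ : ℝ) (p : ℝ × ℝ) : ℝ :=
  κ₂ * (1 + ε₂ / σ₂ ^ 2 * p.1) * (θ₂ - p.2)
    + κ₁ * (γ / σ₁ ^ 2) * p.2 * (θ₁ - p.1)

/-- The generator of the ADC bivariate CIR-like model. -/
noncomputable def adcGen (κ₁ θ₁ σ₁ κ₂ θ₂ σ₂ ε₁ ε₂ γ : ℝ)
    (f : ℝ × ℝ → ℝ) (p : ℝ × ℝ) : ℝ :=
  A1 κ₁ θ₁ σ₁ κ₂ θ₂ σ₂ ε₁ γ p * d1 f p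
    + A2 κ₁ θ₁ σ₁ κ₂ θ₂ σ₂ ε₂ γ p * d2 f p
    + 1 / 2 * (S11 σ₁ ε₁ p * d1 (d1 f) p
        + 2 * S12 γ p * d1 (d2 f) p
        + S22 σ₂ ε₂ p * d2 (d2 f) p)

theorem aux_piDens_pos (ν θ x : ℝ) (hν : 0 < ν) (hθ : 0 < θ) (hx : 0 < x) :
    0 < piDens ν θ x := by
  unfold piDens
  have h := Real.Gamma_pos_of_pos hν
  positivity

theorem aux_piDens_deriv (ν θ x : ℝ) (hx : 0 < x) :
    HasDerivAt (piDens ν θ) (piDens ν θ x * ((ν - 1) / x - ν / θ)) x := by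
  have h1 : HasDerivAt (fun y : ℝ => y ^ (ν - 1)) ((ν - 1) * x ^ (ν - 1 - 1)) x :=
    Real.hasDerivAt_rpow_const (Or.inl hx.ne')
  have h2 : HasDerivAt (fun y : ℝ => Real.exp (-ν * y / θ))
      (Real.exp (-ν * x / θ) * (-ν * 1 / θ)) x :=
    (((hasDerivAt_id x).const_mul (-ν)).div_const θ).exp
  have h3 := (h1.const_mul ((ν / θ) ^ ν / Real.Gamma ν)).mul h2
  refine h3.congr_deriv ?_
  rw [Real.rpow_sub_one hx.ne' (ν - 1)]
  unfold piDens
  ring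

theorem aux_d1 (f : ℝ × ℝ → ℝ) (q : ℝ × ℝ) (hf : DifferentiableAt ℝ f q) :
    HasDerivAt (fun t => f (t, q.2)) (fderiv ℝ f q (1, 0)) q.1 := by
  have h : HasDerivAt (fun t : ℝ => (t, q.2)) ((1 : ℝ), (0 : ℝ)) q.1 :=
    (hasDerivAt_id q.1).prodMk (hasDerivAt_const q.1 q.2)
  exact HasFDerivAt.comp_hasDerivAt (f := fun t : ℝ => (t, q.2)) q.1 hf.hasFDerivAt h

theorem aux_d2 (f : ℝ × ℝ → ℝ) (q : ℝ × ℝ) (hf : DifferentiableAt ℝ f q) :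
    HasDerivAt (fun t => f (q.1, t)) (fderiv ℝ f q (0, 1)) q.2 := by
  have h : HasDerivAt (fun t : ℝ => (q.1, t)) ((0 : ℝ), (1 : ℝ)) q.2 :=
    (hasDerivAt_const q.2 q.1).prodMk (hasDerivAt_id q.2)
  exact HasFDerivAt.comp_hasDerivAt (f := fun t : ℝ => (q.1, t)) q.2 hf.hasFDerivAt h

theorem aux_d1_eq (f : ℝ × ℝ → ℝ) (hf : ContDiff ℝ 2 f) :
    d1 f = fun q => fderiv ℝ f q (1, 0) := by
  funext q
  exact (aux_d1 f q (hf.differentiable (by norm_num) q)).deriv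

theorem aux_d2_eq (f : ℝ × ℝ → ℝ) (hf : ContDiff ℝ 2 f) :
    d2 f = fun q => fderiv ℝ f q (0, 1) := by
  funext q
  exact (aux_d2 f q (hf.differentiable (by norm_num) q)).deriv

theorem aux_fderiv_diff (f : ℝ × ℝ → ℝ) (hf : ContDiff ℝ 2 f) :
    Differentiable ℝ (fderiv ℝ f) :=
  (hf.fderiv_right (m := 1) (by norm_num)).differentiable (by norm_num)

theorem aux_d1_diff (f : ℝ × ℝ → ℝ) (hf : ContDiff ℝ 2 f) : Differentiable ℝ (d1 f) := by
  rw [aux_d1_eq f hf]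
  have := aux_fderiv_diff f hf
  fun_prop

theorem aux_d2_diff (f : ℝ × ℝ → ℝ) (hf : ContDiff ℝ 2 f) : Differentiable ℝ (d2 f) := by
  rw [aux_d2_eq f hf]
  have := aux_fderiv_diff f hf
  fun_prop

theorem aux_part1 (g : ℝ × ℝ → ℝ) (hg : Differentiable ℝ g) (p : ℝ × ℝ) :
    HasDerivAt (fun t => g (t, p.2)) (d1 g p) p.1 :=
  (aux_d1 g p (hg p)).differentiableAt.hasDerivAt

theorem aux_part2 (g : ℝ × ℝ → ℝ) (hg : Differentiable ℝ g) (p : ℝ × ℝ) :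
    HasDerivAt (fun t => g (p.1, t)) (d2 g p) p.2 :=
  (aux_d2 g p (hg p)).differentiableAt.hasDerivAt

theorem aux_symm (f : ℝ × ℝ → ℝ) (hf : ContDiff ℝ 2 f) (p : ℝ × ℝ) :
    d2 (d1 f) p = d1 (d2 f) p := by
  have e1 : d2 (d1 f) p = fderiv ℝ (d1 f) p (0, 1) := (aux_d2 _ p (aux_d1_diff f hf p)).deriv
  have e2 : d1 (d2 f) p = fderiv ℝ (d2 f) p (1, 0) := (aux_d1 _ p (aux_d2_diff f hf p)).deriv
  have hd := aux_fderiv_diff f hf p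
  rw [e1, e2, aux_d1_eq f hf, aux_d2_eq f hf]
  rw [fderiv_clm_apply hd (by fun_prop), fderiv_clm_apply hd (by fun_prop)]
  have hs : IsSymmSndFDerivAt ℝ f p := hf.contDiffAt.isSymmSndFDerivAt (by simp)
  simpa using hs (0, 1) (1, 0)

theorem adc_generator_divergence_form
    (κ₁ κ₂ θ₁ θ₂ σ₁ σ₂ ν₁ ν₂ ε₁ ε₂ γ : ℝ)
    (hκ₁ : 0 < κ₁) (hκ₂ : 0 < κ₂) (hθ₁ : 0 < θ₁) (hθ₂ : 0 < θ₂)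
    (hσ₁ : 0 < σ₁) (hσ₂ : 0 < σ₂)
    (hν₁ : ν₁ = 2 * κ₁ * θ₁ / σ₁ ^ 2) (hν₂ : ν₂ = 2 * κ₂ * θ₂ / σ₂ ^ 2)
    (hε₁ : 0 ≤ ε₁) (hε₂ : 0 ≤ ε₂) :
    (∀ p : ℝ × ℝ, 0 < p.1 → 0 < p.2 →
      A1 κ₁ θ₁ σ₁ κ₂ θ₂ σ₂ ε₁ γ p
          = 1 / (2 * pi2 ν₁ θ₁ ν₂ θ₂ p)
            * (deriv (fun t => pi2 ν₁ θ₁ ν₂ θ₂ (t, p.2) * S11 σ₁ ε₁ (t, p.2)) p.1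
              + deriv (fun t => pi2 ν₁ θ₁ ν₂ θ₂ (p.1, t) * S12 γ (p.1, t)) p.2)
        ∧ A2 κ₁ θ₁ σ₁ κ₂ θ₂ σ₂ ε₂ γ p
          = 1 / (2 * pi2 ν₁ θ₁ ν₂ θ₂ p)
            * (deriv (fun t => pi2 ν₁ θ₁ ν₂ θ₂ (t, p.2) * S12 γ (t, p.2)) p.1
              + deriv (fun t => pi2 ν₁ θ₁ ν₂ θ₂ (p.1, t) * S22 σ₂ ε₂ (p.1, t)) p.2))
    ∧ (∀ f : ℝ × ℝ → ℝ, ContDiff ℝ 2 f →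
        ∀ p : ℝ × ℝ, 0 < p.1 → 0 < p.2 →
        adcGen κ₁ θ₁ σ₁ κ₂ θ₂ σ₂ ε₁ ε₂ γ f p
          = 1 / 2 * (1 / pi2 ν₁ θ₁ ν₂ θ₂ p)
            * (deriv (fun t => pi2 ν₁ θ₁ ν₂ θ₂ (t, p.2)
                  * (S11 σ₁ ε₁ (t, p.2) * d1 f (t, p.2)
                    + S12 γ (t, p.2) * d2 f (t, p.2))) p.1
              + deriv (fun t => pi2 ν₁ θ₁ ν₂ θ₂ (p.1, t)
                  * (S12 γ (p.1, t) * d1 f (p.1, t)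
                    + S22 σ₂ ε₂ (p.1, t) * d2 f (p.1, t))) p.2)) := by
  have hν₁p : 0 < ν₁ := by rw [hν₁]; positivity
  have hν₂p : 0 < ν₂ := by rw [hν₂]; positivity
  have key : ∀ p : ℝ × ℝ, 0 < p.1 → 0 < p.2 → ∀ u v : ℝ × ℝ → ℝ,
      Differentiable ℝ u → Differentiable ℝ v →
      deriv (fun t => pi2 ν₁ θ₁ ν₂ θ₂ (t, p.2)
                  * (S11 σ₁ ε₁ (t, p.2) * u (t, p.2) + S12 γ (t, p.2) * v (t, p.2))) p.1
        = pi2 ν₁ θ₁ ν₂ θ₂ p * (((ν₁ - 1) / p.1 - ν₁ / θ₁)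
            * (S11 σ₁ ε₁ p * u p + S12 γ p * v p)
          + (σ₁ ^ 2 + ε₁ * p.2) * u p + S11 σ₁ ε₁ p * d1 u p
          + γ * p.2 * v p + S12 γ p * d1 v p) ∧
      deriv (fun t => pi2 ν₁ θ₁ ν₂ θ₂ (p.1, t)
                  * (S12 γ (p.1, t) * u (p.1, t) + S22 σ₂ ε₂ (p.1, t) * v (p.1, t))) p.2
        = pi2 ν₁ θ₁ ν₂ θ₂ p * (((ν₂ - 1) / p.2 - ν₂ / θ₂)
            * (S12 γ p * u p + S22 σ₂ ε₂ p * v p)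
          + γ * p.1 * u p + S12 γ p * d2 u p
          + (σ₂ ^ 2 + ε₂ * p.1) * v p + S22 σ₂ ε₂ p * d2 v p) := by
    intro p h1 h2 u v hu hv
    constructor
    · have hpi := (aux_piDens_deriv ν₁ θ₁ p.1 h1).mul_const (piDens ν₂ θ₂ p.2)
      have hS : HasDerivAt (fun t => S11 σ₁ ε₁ (t, p.2)) (σ₁ ^ 2 * 1 + ε₁ * 1 * p.2) p.1 :=
        ((hasDerivAt_id p.1).const_mul (σ₁ ^ 2)).add
          (((hasDerivAt_id p.1).const_mul ε₁).mul_const p.2)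
      have hT : HasDerivAt (fun t => S12 γ (t, p.2)) (γ * 1 * p.2) p.1 :=
        ((hasDerivAt_id p.1).const_mul γ).mul_const p.2
      have h := hpi.mul ((hS.mul (aux_part1 u hu p)).add (hT.mul (aux_part1 v hv p)))
      refine (HasDerivAt.congr_deriv h ?_).deriv
      simp only [pi2, Pi.add_apply, Pi.mul_apply]
      ring
    · have hpi := (aux_piDens_deriv ν₂ θ₂ p.2 h2).const_mul (piDens ν₁ θ₁ p.1)
      have hS : HasDerivAt (fun t => S22 σ₂ ε₂ (p.1, t)) (σ₂ ^ 2 * 1 + ε₂ * p.1 * 1) p.2 :=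
        ((hasDerivAt_id p.2).const_mul (σ₂ ^ 2)).add
          ((hasDerivAt_id p.2).const_mul (ε₂ * p.1))
      have hT : HasDerivAt (fun t => S12 γ (p.1, t)) (γ * p.1 * 1) p.2 :=
        (hasDerivAt_id p.2).const_mul (γ * p.1)
      have h := hpi.mul ((hT.mul (aux_part2 u hu p)).add (hS.mul (aux_part2 v hv p)))
      refine (HasDerivAt.congr_deriv h ?_).deriv
      simp only [pi2, Pi.add_apply, Pi.mul_apply]
      ring
  have hpos : ∀ p : ℝ × ℝ, 0 < p.1 → 0 < p.2 → pi2 ν₁ θ₁ ν₂ θ₂ p ≠ 0 := fun p h1 h2 =>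
    (mul_pos (aux_piDens_pos ν₁ θ₁ p.1 hν₁p hθ₁ h1) (aux_piDens_pos ν₂ θ₂ p.2 hν₂p hθ₂ h2)).ne'
  have c0 : ∀ (c : ℝ) (p : ℝ × ℝ), d1 (fun _ => c) p = 0 ∧ d2 (fun _ => c) p = 0 := by
    intro c p
    simp [d1, d2]
  constructor
  · intro p h1 h2
    have k1 := key p h1 h2 (fun _ => 1) (fun _ => 0) (by fun_prop) (by fun_prop)
    have k2 := key p h1 h2 (fun _ => 0) (fun _ => 1) (by fun_prop) (by fun_prop)
    have hp := hpos p h1 h2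
    simp only [(c0 _ p).1, (c0 _ p).2, mul_one, mul_zero, add_zero, zero_add] at k1 k2
    rw [k1.1, k1.2, k2.1, k2.2]
    generalize pi2 ν₁ θ₁ ν₂ θ₂ p = P at hp
    subst hν₁ hν₂
    simp only [A1, A2, S11, S12, S22]
    constructor <;> field_simp <;> ring
  · intro f hf p h1 h2
    have k := key p h1 h2 (d1 f) (d2 f) (aux_d1_diff f hf) (aux_d2_diff f hf)
    have hp := hpos p h1 h2
    rw [k.1, k.2, aux_symm f hf]
    unfold adcGen
    generalize pi2 ν₁ θ₁ ν₂ θ₂ p = P at hp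
    subst hν₁ hν₂
    simp only [A1, A2, S11, S12, S22]
    field_simp
    ring
end

section
/- Let κᵢ, θᵢ, σᵢ > 0 with νᵢ := 2κᵢθᵢ/σᵢ², βᵢ := εᵢ/σᵢ², αᵢ := γ/σᵢ² for i = 1,2, where ε₁, ε₂ ≥ 0 and γ ∈ ℝ, and let π(x₁,x₂) := π_{ν₁,θ₁}(x₁)·π_{ν₂,θ₂}(x₂). Let L be the ADC generator L f := A₁·∂₁f + A₂·∂₂f + (1/2)(S₁₁·∂₁₁f + 2S₁₂·∂₁₂f + S₂₂·∂₂₂f), where A₁(x) = κ₁(1 + β₁x₂)(θ₁ − x₁) + κ₂α₂x₁(θ₂ − x₂), A₂(x) = κ₂(1 + β₂x₁)(θ₂ − x₂) + κ₁α₁x₂(θ₁ − x₁), S₁₁ = σ₁²x₁ + ε₁x₁x₂, S₁₂ = S₂₁ = γx₁x₂, S₂₂ = σ₂²x₂ + ε₂x₁x₂. Then for all f, g : ℝ² → ℝ twice continuously differentiable with compact support contained in (0,∞)², ∫∫_{(0,∞)²} f(x)·(L g)(x)·π(x) dx = ∫∫_{(0,∞)²} g(x)·(L f)(x)·π(x)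 dx; that is, the ADC process is reversible with respect to the product of the two Gamma distributions π_{ν₁,θ₁} and π_{ν₂,θ₂}. -/
open Real MeasureTheory Set

lemma adc_hd1 {f : ℝ × ℝ → ℝ} (hf : ContDiff ℝ 1 f) (p : ℝ × ℝ) :
    HasDerivAt (fun t => f (t, p.2)) (fderiv ℝ f p (1, 0)) p.1 := by
  have h1 : HasFDerivAt f (fderiv ℝ f p) (p.1, p.2) :=
    (hf.differentiable one_ne_zero p).hasFDerivAt
  have h2 : HasDerivAt (fun t : ℝ => (t, p.2)) ((1 : ℝ), (0 : ℝ)) p.1 :=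
    (hasDerivAt_id p.1).prodMk (hasDerivAt_const p.1 p.2)
  exact h1.comp_hasDerivAt p.1 h2

lemma adc_hd2 {f : ℝ × ℝ → ℝ} (hf : ContDiff ℝ 1 f) (p : ℝ × ℝ) :
    HasDerivAt (fun t => f (p.1, t)) (fderiv ℝ f p (0, 1)) p.2 := by
  have h1 : HasFDerivAt f (fderiv ℝ f p) (p.1, p.2) :=
    (hf.differentiable one_ne_zero p).hasFDerivAt
  have h2 : HasDerivAt (fun t : ℝ => (p.1, t)) ((0 : ℝ), (1 : ℝ)) p.2 :=
    (hasDerivAt_const p.2 p.1).prodMk (hasDerivAt_id p.2)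
  exact h1.comp_hasDerivAt p.2 h2

lemma adc_d1_eq {f : ℝ × ℝ → ℝ} (hf : ContDiff ℝ 1 f) :
    d1 f = fun p => fderiv ℝ f p (1, 0) := by
  funext p
  exact (adc_hd1 hf p).deriv

lemma adc_d2_eq {f : ℝ × ℝ → ℝ} (hf : ContDiff ℝ 1 f) :
    d2 f = fun p => fderiv ℝ f p (0, 1) := by
  funext p
  exact (adc_hd2 hf p).deriv

lemma adc_hd1' {f : ℝ × ℝ → ℝ} (hf : ContDiff ℝ 1 f) (p : ℝ × ℝ) :
    HasDerivAt (fun t => f (t, p.2)) (d1 f p) p.1 := by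
  rw [adc_d1_eq hf]
  exact adc_hd1 hf p

lemma adc_hd2' {f : ℝ × ℝ → ℝ} (hf : ContDiff ℝ 1 f) (p : ℝ × ℝ) :
    HasDerivAt (fun t => f (p.1, t)) (d2 f p) p.2 := by
  rw [adc_d2_eq hf]
  exact adc_hd2 hf p

lemma adc_c0_d1 {f : ℝ × ℝ → ℝ} (hf : ContDiff ℝ 1 f) : Continuous (d1 f) := by
  rw [adc_d1_eq hf]
  exact (hf.continuous_fderiv one_ne_zero).clm_apply continuous_const

lemma adc_c0_d2 {f : ℝ × ℝ → ℝ} (hf : ContDiff ℝ 1 f) : Continuous (d2 f) := by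
  rw [adc_d2_eq hf]
  exact (hf.continuous_fderiv one_ne_zero).clm_apply continuous_const

lemma adc_c1_d1 {f : ℝ × ℝ → ℝ} (hf : ContDiff ℝ 2 f) : ContDiff ℝ 1 (d1 f) := by
  rw [adc_d1_eq (hf.of_le one_le_two)]
  exact (hf.fderiv_right (m := 1) (by norm_num)).clm_apply contDiff_const

lemma adc_c1_d2 {f : ℝ × ℝ → ℝ} (hf : ContDiff ℝ 2 f) : ContDiff ℝ 1 (d2 f) := by
  rw [adc_d2_eq (hf.of_le one_le_two)]
  exact (hf.fderiv_right (m := 1) (by norm_num)).clm_apply contDiff_const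

lemma adc_symm {f : ℝ × ℝ → ℝ} (hf : ContDiff ℝ 2 f) (p : ℝ × ℝ) :
    d2 (d1 f) p = d1 (d2 f) p := by
  have hf1 : ContDiff ℝ 1 f := hf.of_le one_le_two
  have hd : DifferentiableAt ℝ (fderiv ℝ f) p :=
    (hf.fderiv_right (m := 1) (by norm_num)).differentiable one_ne_zero p
  have hs : IsSymmSndFDerivAt ℝ f p := hf.contDiffAt.isSymmSndFDerivAt (by simp)
  rw [adc_d2_eq (adc_c1_d1 hf), adc_d1_eq (adc_c1_d2 hf), adc_d1_eq hf1, adc_d2_eq hf1]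
  simp only
  rw [fderiv_clm_apply hd (by fun_prop), fderiv_clm_apply hd (by fun_prop)]
  simpa using hs.eq (0, 1) (1, 0)

/-- The integral of a directional derivative of a compactly supported function vanishes. -/
lemma adc_int_zero {W : ℝ × ℝ → ℝ} (hW : ContDiff ℝ 1 W) (hc : HasCompactSupport W)
    (v : ℝ × ℝ) : Integrable (fun p => fderiv ℝ W p v) ∧ ∫ p, fderiv ℝ W p v = 0 := by
  have hi : Integrable (fun p => fderiv ℝ W p v) := by
    refine ((hW.continuous_fderiv one_ne_zero).clm_apply
      continuous_const).integrable_of_hasCompactSupport ?_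
    exact hc.fderiv_apply (𝕜 := ℝ) v
  refine ⟨hi, ?_⟩
  have := integral_mul_fderiv_eq_neg_fderiv_mul_of_integrable (𝕜 := ℝ) (μ := (volume : Measure (ℝ × ℝ)))
    (f := fun _ => (1 : ℝ)) (g := W) (v := v) (by simp) (by simpa using hi)
    (by simpa using hW.continuous.integrable_of_hasCompactSupport hc)
    (fun _ _ => differentiableAt_const _) (fun x _ => hW.differentiable one_ne_zero x)
  simpa using this

lemma adc_tsupport_mul {u h : ℝ × ℝ → ℝ} : tsupport (fun p => u p * h p) ⊆ tsupport h :=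
  closure_mono (Function.support_mul_subset_right u h)

lemma adc_c1_mul {Q : Set (ℝ × ℝ)} (hQ : IsOpen Q) {u h : ℝ × ℝ → ℝ} (hu : ContDiffOn ℝ 1 u Q)
    (hh : ContDiff ℝ 1 h) (hs : tsupport h ⊆ Q) : ContDiff ℝ 1 (fun p => u p * h p) := by
  refine contMDiff_iff_contDiff.1 (contMDiff_of_tsupport fun x hx => contMDiffAt_iff_contDiffAt.2 ?_)
  have hx' : x ∈ Q := hs (adc_tsupport_mul hx)
  exact (hu.contDiffAt (hQ.mem_nhds hx')).mul hh.contDiffAt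

lemma adc_integrable_mul {Q : Set (ℝ × ℝ)} (hQ : IsOpen Q) {u h : ℝ × ℝ → ℝ}
    (hu : ContinuousOn u Q)
    (hh : Continuous h) (hc : HasCompactSupport h) (hs : tsupport h ⊆ Q) :
    Integrable (fun p => u p * h p) := by
  have : Continuous (fun p => u p * h p) := by
    refine continuous_of_tsupport fun x hx => ?_
    have hx' : x ∈ Q := hs (adc_tsupport_mul hx)
    exact (hu.continuousAt (hQ.mem_nhds hx')).mul hh.continuousAt
  exact this.integrable_of_hasCompactSupport (hc.mul_left)

lemma adc_pi_deriv (ν θ x : ℝ) (hx : 0 < x) :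
    HasDerivAt (piDens ν θ) (((ν - 1) / x - ν / θ) * piDens ν θ x) x := by
  have h1 : HasDerivAt (fun x : ℝ => x ^ (ν - 1)) ((ν - 1) * x ^ (ν - 1 - 1)) x :=
    Real.hasDerivAt_rpow_const (Or.inl hx.ne')
  have h2 : HasDerivAt (fun x : ℝ => Real.exp (-ν * x / θ))
      (Real.exp (-ν * x / θ) * (-ν * 1 / θ)) x :=
    (((hasDerivAt_id x).const_mul (-ν)).div_const θ).exp
  have h3 := (h1.const_mul ((ν / θ) ^ ν / Real.Gamma ν)).mul h2
  refine h3.congr_deriv ?_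
  rw [Real.rpow_sub_one hx.ne']
  unfold piDens
  ring

lemma adc_pi_c1 (ν θ : ℝ) : ContDiffOn ℝ 1 (piDens ν θ) (Ioi 0) := by
  intro x hx
  have hx : (0:ℝ) < x := hx
  refine ContDiffAt.contDiffWithinAt ?_
  unfold piDens
  have : ContDiffAt ℝ 1 (fun x : ℝ => x ^ (ν - 1)) x := Real.contDiffAt_rpow_const (Or.inl hx.ne')
  exact (contDiffAt_const.mul this).mul (by fun_prop)

lemma adc_pi2_c1 (ν₁ θ₁ ν₂ θ₂ : ℝ) :
    ContDiffOn ℝ 1 (pi2 ν₁ θ₁ ν₂ θ₂) (Ioi (0:ℝ) ×ˢ Ioi (0:ℝ)) := by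
  unfold pi2
  exact ((adc_pi_c1 ν₁ θ₁).comp contDiffOn_fst fun p hp => hp.1).mul
    ((adc_pi_c1 ν₂ θ₂).comp contDiffOn_snd fun p hp => hp.2)

lemma adc_gen_cont (κ₁ θ₁ σ₁ κ₂ θ₂ σ₂ ε₁ ε₂ γ : ℝ) {f : ℝ × ℝ → ℝ} (hf : ContDiff ℝ 2 f) :
    Continuous (adcGen κ₁ θ₁ σ₁ κ₂ θ₂ σ₂ ε₁ ε₂ γ f) := by
  have h1 := (adc_c1_d1 hf).continuous
  have h2 := (adc_c1_d2 hf).continuous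
  have h3 := adc_c0_d1 (adc_c1_d1 hf)
  have h4 := adc_c0_d1 (adc_c1_d2 hf)
  have h5 := adc_c0_d2 (adc_c1_d2 hf)
  unfold adcGen A1 A2 S11 S12 S22
  fun_prop

theorem adc_generator_symmetric
    (κ₁ κ₂ θ₁ θ₂ σ₁ σ₂ ν₁ ν₂ ε₁ ε₂ γ : ℝ)
    (hκ₁ : 0 < κ₁) (hκ₂ : 0 < κ₂) (hθ₁ : 0 < θ₁) (hθ₂ : 0 < θ₂)
    (hσ₁ : 0 < σ₁) (hσ₂ : 0 < σ₂)
    (hν₁ : ν₁ = 2 * κ₁ * θ₁ / σ₁ ^ 2) (hν₂ : ν₂ = 2 * κ₂ * θ₂ / σ₂ ^ 2)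
    (hε₁ : 0 ≤ ε₁) (hε₂ : 0 ≤ ε₂)
    (f g : ℝ × ℝ → ℝ)
    (hf : ContDiff ℝ 2 f) (hfc : HasCompactSupport f)
    (hfs : tsupport f ⊆ Set.Ioi (0:ℝ) ×ˢ Set.Ioi (0:ℝ))
    (hg : ContDiff ℝ 2 g) (hgc : HasCompactSupport g)
    (hgs : tsupport g ⊆ Set.Ioi (0:ℝ) ×ˢ Set.Ioi (0:ℝ)) :
    ∫ p in Set.Ioi (0:ℝ) ×ˢ Set.Ioi (0:ℝ),
        f p * adcGen κ₁ θ₁ σ₁ κ₂ θ₂ σ₂ ε₁ ε₂ γ g p * pi2 ν₁ θ₁ ν₂ θ₂ p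
      = ∫ p in Set.Ioi (0:ℝ) ×ˢ Set.Ioi (0:ℝ),
        g p * adcGen κ₁ θ₁ σ₁ κ₂ θ₂ σ₂ ε₁ ε₂ γ f p * pi2 ν₁ θ₁ ν₂ θ₂ p := by

  have hQ : IsOpen (Ioi (0:ℝ) ×ˢ Ioi (0:ℝ)) := isOpen_Ioi.prod isOpen_Ioi
  have hP := adc_pi2_c1 ν₁ θ₁ ν₂ θ₂
  have hf1 : ContDiff ℝ 1 f := hf.of_le one_le_two
  have hg1 : ContDiff ℝ 1 g := hg.of_le one_le_two
  have hf_1 := adc_c1_d1 hf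
  have hf_2 := adc_c1_d2 hf
  have hg_1 := adc_c1_d1 hg
  have hg_2 := adc_c1_d2 hg
  have hI : ∀ f g : ℝ × ℝ → ℝ, ContDiff ℝ 1 f → HasCompactSupport f →
      tsupport f ⊆ Ioi (0:ℝ) ×ˢ Ioi (0:ℝ) → ContDiff ℝ 2 g →
      Integrable (fun p => f p * adcGen κ₁ θ₁ σ₁ κ₂ θ₂ σ₂ ε₁ ε₂ γ g p * pi2 ν₁ θ₁ ν₂ θ₂ p) := by
    intro f g hf hfc hfs hg
    have := adc_integrable_mul hQ
      (((adc_gen_cont κ₁ θ₁ σ₁ κ₂ θ₂ σ₂ ε₁ ε₂ γ hg).continuousOn).mul hP.continuousOn)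
      hf.continuous hfc hfs
    refine this.congr (Filter.Eventually.of_forall fun p => ?_)
    simp only [Pi.mul_apply]
    ring
  rw [← sub_eq_zero, ← integral_sub (hI f g hf1 hfc hfs hg).integrableOn
    (hI g f hg1 hgc hgs hf).integrableOn]
  -- the two components of the flux
  have key : ∀ a b : ℝ × ℝ → ℝ, ContDiff ℝ 1 a → ContDiff ℝ 1 b →
      ∀ W : ℝ × ℝ → ℝ, W = (fun p => (pi2 ν₁ θ₁ ν₂ θ₂ p * a p) * f p
        - (pi2 ν₁ θ₁ ν₂ θ₂ p * b p) * g p) →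
      ContDiff ℝ 1 W ∧ HasCompactSupport W ∧ tsupport W ⊆ Ioi (0:ℝ) ×ˢ Ioi (0:ℝ) := by
    intro a b ha hb W hW
    subst hW
    refine ⟨(adc_c1_mul hQ (hP.mul ha.contDiffOn) hf1 hfs).sub
      (adc_c1_mul hQ (hP.mul hb.contDiffOn) hg1 hgs), (hfc.mul_left).sub (hgc.mul_left), ?_⟩
    refine (tsupport_sub _ _).trans (union_subset ?_ ?_)
    · exact adc_tsupport_mul.trans hfs
    · exact adc_tsupport_mul.trans hgs
  obtain ⟨W1, hW1⟩ : ∃ W : ℝ × ℝ → ℝ, W = (fun p =>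
      (pi2 ν₁ θ₁ ν₂ θ₂ p * (1 / 2 * (S11 σ₁ ε₁ p * d1 g p + S12 γ p * d2 g p))) * f p
        - (pi2 ν₁ θ₁ ν₂ θ₂ p * (1 / 2 * (S11 σ₁ ε₁ p * d1 f p + S12 γ p * d2 f p))) * g p) :=
    ⟨_, rfl⟩
  obtain ⟨W2, hW2⟩ : ∃ W : ℝ × ℝ → ℝ, W = (fun p =>
      (pi2 ν₁ θ₁ ν₂ θ₂ p * (1 / 2 * (S12 γ p * d1 g p + S22 σ₂ ε₂ p * d2 g p))) * f p
        - (pi2 ν₁ θ₁ ν₂ θ₂ p * (1 / 2 * (S12 γ p * d1 f p + S22 σ₂ ε₂ p * d2 f p))) * g p) :=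
    ⟨_, rfl⟩
  obtain ⟨hc1, hs1, ht1⟩ := key _ _ (by unfold S11 S12; fun_prop) (by unfold S11 S12; fun_prop)
    W1 hW1
  obtain ⟨hc2, hs2, ht2⟩ := key _ _ (by unfold S22 S12; fun_prop) (by unfold S22 S12; fun_prop)
    W2 hW2
  obtain ⟨hi1, hz1⟩ := adc_int_zero hc1 hs1 (1, 0)
  obtain ⟨hi2, hz2⟩ := adc_int_zero hc2 hs2 (0, 1)
  have hz : ∀ W : ℝ × ℝ → ℝ, tsupport W ⊆ Ioi (0:ℝ) ×ˢ Ioi (0:ℝ) →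
      ∀ p, p ∉ Ioi (0:ℝ) ×ˢ Ioi (0:ℝ) → fderiv ℝ W p = 0 := by
    intro W hW p hp
    by_contra h
    exact hp (hW (support_fderiv_subset ℝ (Function.mem_support.2 h)))
  have hfin : ∫ p in Ioi (0:ℝ) ×ˢ Ioi (0:ℝ), (fderiv ℝ W1 p (1, 0) + fderiv ℝ W2 p (0, 1)) = 0 := by
    rw [setIntegral_eq_integral_of_forall_compl_eq_zero, integral_add hi1 hi2, hz1, hz2, add_zero]
    intro p hp
    rw [hz W1 ht1 p hp, hz W2 ht2 p hp]
    simp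
  refine Eq.trans ?_ hfin
  apply setIntegral_congr_fun hQ.measurableSet
  intro p hp
  have hx : 0 < p.1 := hp.1
  have hy : 0 < p.2 := hp.2
  have hp1 := adc_pi_deriv ν₁ θ₁ p.1 hx
  have hp2 := adc_pi_deriv ν₂ θ₂ p.2 hy
  have e1 := adc_hd1 hc1 p
  have e2 := adc_hd2 hc2 p
  have i1 := hasDerivAt_id p.1
  have i2 := hasDerivAt_id p.2
  have k1 : ∀ g : ℝ × ℝ → ℝ, ContDiff ℝ 2 g → HasDerivAt (fun t => pi2 ν₁ θ₁ ν₂ θ₂ (t, p.2) *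
      (1 / 2 * (S11 σ₁ ε₁ (t, p.2) * d1 g (t, p.2) + S12 γ (t, p.2) * d2 g (t, p.2)))) _ p.1 :=
    fun g hg => (hp1.mul_const (piDens ν₂ θ₂ p.2)).mul
    ((((((i1.const_mul (σ₁ ^ 2)).add ((i1.const_mul ε₁).mul_const p.2)).mul
      (adc_hd1' (adc_c1_d1 hg) p)).add
      (((i1.const_mul γ).mul_const p.2).mul (adc_hd1' (adc_c1_d2 hg) p))).const_mul (1 / 2)))
  have k2 : ∀ g : ℝ × ℝ → ℝ, ContDiff ℝ 2 g → HasDerivAt (fun t => pi2 ν₁ θ₁ ν₂ θ₂ (p.1, t) *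
      (1 / 2 * (S12 γ (p.1, t) * d1 g (p.1, t) + S22 σ₂ ε₂ (p.1, t) * d2 g (p.1, t)))) _ p.2 :=
    fun g hg => (hp2.const_mul (piDens ν₁ θ₁ p.1)).mul
    (((((i2.const_mul (γ * p.1)).mul (adc_hd2' (adc_c1_d1 hg) p)).add
      (((i2.const_mul (σ₂ ^ 2)).add (i2.const_mul (ε₂ * p.1))).mul
      (adc_hd2' (adc_c1_d2 hg) p))).const_mul (1 / 2)))
  have r1 := ((k1 g hg).mul (adc_hd1' hf1 p)).sub ((k1 f hf).mul (adc_hd1' hg1 p))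
  have r2 := ((k2 g hg).mul (adc_hd2' hf1 p)).sub ((k2 f hf).mul (adc_hd2' hg1 p))
  rw [hW1] at e1
  rw [hW2] at e2
  have u1 := e1.unique r1
  have u2 := e2.unique r2
  rw [← hW1] at u1
  rw [← hW2] at u2
  beta_reduce
  rw [u1, u2, adc_symm hf p, adc_symm hg p]
  simp only [adcGen, A1, A2, S11, S12, S22, pi2, hν₁, hν₂, Pi.mul_apply, Pi.add_apply, id]
  generalize piDens (2 * κ₁ * θ₁ / σ₁ ^ 2) θ₁ p.1 = P1
  generalize piDens (2 * κ₂ * θ₂ / σ₂ ^ 2) θ₂ p.2 = P2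
  field_simp
  ring
end
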